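/- arXiv:2212.00516 — 3 statements merged into one kernel-verified Lean document; each statement's English description precedes it below -/
import Mathlib

section
/- Let A be a nonempty type, ε = (ε_n)_{n≥0} a sequence in A, and define finite words W_0 = [] (the empty word) and W_{n+1} = W_n · [ε_n] · W_n (concatenation). Then for every m ≥ 0 and every index n with n < 2^m − 1, the n-th letter (0-indexed) of W_m equals ε_{v₂(n+1)}, where v₂(k) denotes the 2-adic valuation of k (the exponent of the largest power of 2 dividing k). -/
/-- The words `W 0 = []`, `W (n+1) = W n ++ [ε n] ++ W n`. -/
def W {A : Type*} (ε : ℕ → A) : ℕ → List A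
  | 0 => []
  | n + 1 => W ε n ++ [ε n] ++ W ε n

theorem W_length {A : Type*} (ε : ℕ → A) (m : ℕ) : (W ε m).length = 2 ^ m - 1 := by
  induction m with
  | zero => simp [W]
  | succ m ih =>
    have := Nat.one_le_two_pow (n := m)
    simp only [W, List.length_append, ih, List.length_singleton, pow_succ]
    omega

theorem val_add_aux (m k : ℕ) (hk : 0 < k) (hkm : k < 2 ^ m) :
    padicValNat 2 (2 ^ m + k) = padicValNat 2 k := by
  have hnd : ¬ 2 ^ m ∣ k := fun h => absurd (Nat.le_of_dvd hk h) (by omega)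
  have key : ∀ j, 2 ^ j ∣ 2 ^ m + k ↔ 2 ^ j ∣ k := by
    intro j
    rcases le_total j m with h | h
    · exact Nat.dvd_add_right (pow_dvd_pow 2 h)
    · have hp : 2 ^ m ∣ 2 ^ j := pow_dvd_pow 2 h
      exact ⟨fun hd => absurd ((Nat.dvd_add_right (dvd_refl _)).1 (hp.trans hd)) hnd,
        fun hd => absurd (hp.trans hd) hnd⟩
  apply le_antisymm
  · rw [← padicValNat_dvd_iff_le (by omega), ← key]
    exact pow_padicValNat_dvd
  · rw [← padicValNat_dvd_iff_le (by omega), key]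
    exact pow_padicValNat_dvd

/-- For every `m` and every index `n < 2^m - 1`, the `n`-th letter (0-indexed) of `W m`
is `ε (v₂ (n+1))`, where `v₂` is the 2-adic valuation. -/
theorem letter_of_W_eq {A : Type*} [Nonempty A] (ε : ℕ → A) :
    ∀ m n : ℕ, n < 2 ^ m - 1 →
      (W ε m)[n]? = some (ε (padicValNat 2 (n + 1))) := by
  intro m
  induction m with
  | zero => intro n hn; simp at hn
  | succ m ih =>
    intro n hn
    have hpos := Nat.one_le_two_pow (n := m)
    have hl := W_length ε m
    rw [pow_succ] at hn
    rw [W, List.append_assoc]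
    rcases lt_trichotomy n (2 ^ m - 1) with h | h | h
    · rw [List.getElem?_append_left (by omega)]
      exact ih n h
    · rw [List.getElem?_append_right (by omega), hl, h, Nat.sub_add_cancel hpos]
      simp
    · obtain ⟨k, rfl⟩ : ∃ k, n = 2 ^ m + k := ⟨n - 2 ^ m, by omega⟩
      rw [List.getElem?_append_right (by omega), hl,
        show 2 ^ m + k - (2 ^ m - 1) = k + 1 by omega, add_assoc,
        val_add_aux m (k + 1) (by omega) (by omega)]
      simpa using ih k (by omega)
end

section
/- Let ε = (ε_n)_{n≥0} be a sequence of nonconstant polynomials in 𝔽₂[t] and let s_k = ε_{v₂(k+1)} for k ≥ 0, where v₂ is the 2-adic valuation. Define continued-fraction numerators and denominators in 𝔽₂[t] by x_0 = 1, x_1 = s_0, x_{k+1} = s_k x_k + x_{k−1}, and y_0 = 0, y_1 = 1, y_{k+1} = s_k y_k + y_{k−1}. Define u_1 = ε_0, v_1 = 1, u_{n+1} = ε_n u_n², v_{n+1} = ε_n u_n v_n + 1. Then for all n ≥ 1, x_{2^n − 1} = u_n and y_{2^n − 1} = v_n; in particular x_{2^{n+1} − 1} = ε_n x_{2^n − 1}²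 and y_{2^{n+1} − 1} = ε_n x_{2^n − 1} y_{2^n − 1} + 1. -/
/-- `u 1 = ε 0`, `u (n+1) = ε n * (u n)^2`. -/
noncomputable def u (ε : ℕ → Polynomial (ZMod 2)) : ℕ → Polynomial (ZMod 2)
  | 0 => 1
  | n + 1 => ε n * u ε n ^ 2

/-- `v 1 = 1`, `v (n+1) = ε n * u n * v n + 1`. -/
noncomputable def v (ε : ℕ → Polynomial (ZMod 2)) : ℕ → Polynomial (ZMod 2)
  | 0 => 0
  | n + 1 => ε n * u ε n * v ε n + 1

/-- Continued fraction numerators: `x 0 = 1`, `x 1 = s 0`, `x (k+2) = s (k+1) * x (k+1) + x k`. -/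
noncomputable def cfNum (s : ℕ → Polynomial (ZMod 2)) : ℕ → Polynomial (ZMod 2)
  | 0 => 1
  | 1 => s 0
  | k + 2 => s (k + 1) * cfNum s (k + 1) + cfNum s k

/-- Continued fraction denominators: `y 0 = 0`, `y 1 = 1`, `y (k+2) = s (k+1) * y (k+1) + y k`. -/
noncomputable def cfDen (s : ℕ → Polynomial (ZMod 2)) : ℕ → Polynomial (ZMod 2)
  | 0 => 0
  | 1 => 1
  | k + 2 => s (k + 1) * cfDen s (k + 1) + cfDen s k

/-- Product of the elementary continued fraction matrices. -/
noncomputable def cfMat (s : ℕ → Polynomial (ZMod 2)) :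
    ℕ → Matrix (Fin 2) (Fin 2) (Polynomial (ZMod 2))
  | 0 => 1
  | k + 1 => cfMat s k * !![s k, 1; 1, 0]

theorem cfMat_succ_eq (s : ℕ → Polynomial (ZMod 2)) (k : ℕ) :
    cfMat s (k + 1) = !![cfNum s (k + 1), cfNum s k; cfDen s (k + 1), cfDen s k] := by
  induction k with
  | zero => simp [cfMat, cfNum, cfDen]
  | succ k ih =>
    rw [cfMat, ih, Matrix.mul_fin_two]
    simp [cfNum, cfDen, mul_comm]

theorem cfMat_num (s : ℕ → Polynomial (ZMod 2)) (k : ℕ) : cfMat s k 0 0 = cfNum s k := by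
  cases k with
  | zero => simp [cfMat, cfNum]
  | succ k => simp [cfMat_succ_eq]

theorem cfMat_den (s : ℕ → Polynomial (ZMod 2)) (k : ℕ) : cfMat s k 1 0 = cfDen s k := by
  cases k with
  | zero => simp [cfMat, cfDen]
  | succ k => simp [cfMat_succ_eq]

theorem cfMat_add (s : ℕ → Polynomial (ZMod 2)) (a b : ℕ)
    (h : ∀ i < b, s (a + i) = s i) : cfMat s (a + b) = cfMat s a * cfMat s b := by
  induction b with
  | zero => simp [cfMat]
  | succ b ih =>
    rw [← add_assoc, cfMat, ih (fun i hi => h i (by omega)), h b (by omega), cfMat, mul_assoc]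

theorem val_shift (n i : ℕ) (h : i + 1 < 2 ^ n) :
    padicValNat 2 (2 ^ n + i + 1) = padicValNat 2 (i + 1) := by
  have hlt : padicValNat 2 (i + 1) < n := by
    by_contra hc
    have h1 : 2 ^ n ∣ i + 1 := (padicValNat_dvd_iff_le (p := 2) (by omega)).2 (by omega)
    exact absurd (Nat.le_of_dvd (by omega) h1) (by omega)
  have key : ∀ m ≤ n, (m ≤ padicValNat 2 (2 ^ n + i + 1) ↔ m ≤ padicValNat 2 (i + 1)) := by
    intro m hm
    rw [← padicValNat_dvd_iff_le (by omega), ← padicValNat_dvd_iff_le (by omega), add_assoc,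
      Nat.dvd_add_right (pow_dvd_pow 2 hm)]
  have h1 := key (padicValNat 2 (i + 1)) hlt.le
  have h2 := key (padicValNat 2 (i + 1) + 1) hlt
  omega

theorem cfMat_pow (ε s : ℕ → Polynomial (ZMod 2)) (hs : ∀ k, s k = ε (padicValNat 2 (k + 1)))
    (n : ℕ) : ∃ d, cfMat s (2 ^ n - 1) = !![u ε n, v ε n; v ε n, d] ∧
      u ε n * d + v ε n ^ 2 = 1 := by
  have two : (2 : Polynomial (ZMod 2)) = 0 := CharTwo.two_eq_zero
  induction n with
  | zero => exact ⟨1, by simp [cfMat, u, v, Matrix.one_fin_two], by simp [u, v]⟩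
  | succ n ih =>
    obtain ⟨d, hM, hd⟩ := ih
    have hpos : 0 < 2 ^ n := by positivity
    have e : 2 ^ (n + 1) - 1 = (2 ^ n - 1 + 1) + (2 ^ n - 1) := by rw [pow_succ]; omega
    have hsn : s (2 ^ n - 1) = ε n := by
      rw [hs, Nat.sub_add_cancel hpos, padicValNat.prime_pow]
    refine ⟨ε n * v ε n ^ 2, ?_, ?_⟩
    · rw [e, cfMat_add, cfMat, hM, hsn, Matrix.mul_fin_two, Matrix.mul_fin_two]
      · have mk : ∀ a b c d a1 b1 c1 d1 : Polynomial (ZMod 2), a = a1 → b = b1 → c = c1 →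
            d = d1 → !![a, b; c, d] = !![a1, b1; c1, d1] := by
          rintro a b c d _ _ _ _ rfl rfl rfl rfl
          rfl
        apply mk
        · simp only [u]; linear_combination u ε n * v ε n * two
        · simp only [v]; linear_combination hd
        · simp only [v]; linear_combination hd
        · linear_combination v ε n * d * two
      · intro i hi
        rw [Nat.sub_add_cancel hpos, hs, hs, val_shift n i (by omega)]
    · simp only [u, v]
      linear_combination ((ε n * u ε n * v ε n) ^ 2 + ε n * u ε n * v ε n) * two

/-- With `s k = ε (v₂ (k+1))`, for all `n ≥ 1` one has `x (2^n - 1) = u n` and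
`y (2^n - 1) = v n`; in particular `x (2^(n+1) - 1) = ε n * (x (2^n - 1))^2` and
`y (2^(n+1) - 1) = ε n * x (2^n - 1) * y (2^n - 1) + 1`. -/
theorem convergents_at_powers_of_two (ε : ℕ → Polynomial (ZMod 2))
    (hε : ∀ n, 1 ≤ (ε n).natDegree)
    (s : ℕ → Polynomial (ZMod 2)) (hs : ∀ k, s k = ε (padicValNat 2 (k + 1)))
    (n : ℕ) (hn : 1 ≤ n) :
    cfNum s (2 ^ n - 1) = u ε n ∧ cfDen s (2 ^ n - 1) = v ε n ∧
      cfNum s (2 ^ (n + 1) - 1) = ε n * cfNum s (2 ^ n - 1) ^ 2 ∧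
      cfDen s (2 ^ (n + 1) - 1) = ε n * cfNum s (2 ^ n - 1) * cfDen s (2 ^ n - 1) + 1 := by
  have num : ∀ n, cfNum s (2 ^ n - 1) = u ε n := by
    intro n
    obtain ⟨d, hM, -⟩ := cfMat_pow ε s hs n
    rw [← cfMat_num, hM]; rfl
  have den : ∀ n, cfDen s (2 ^ n - 1) = v ε n := by
    intro n
    obtain ⟨d, hM, -⟩ := cfMat_pow ε s hs n
    rw [← cfMat_den, hM]; rfl
  simp only [num, den]
  exact ⟨trivial, trivial, rfl, rfl⟩
end

section
/- Let ε = (ε_n)_{n≥0} be a sequence of nonconstant polynomials in 𝔽₂[t], and define u_1 = ε_0, v_1 = 1, u_{n+1} = ε_n u_n², v_{n+1} = ε_n u_n v_n + 1. Then in the field of rational functions 𝔽₂(t), for every n ≥ 1, v_n / u_n = Σ_{i=1}^{n} 1/u_i. -/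
theorem u_ne_zero_aux (ε : ℕ → Polynomial (ZMod 2)) (hε : ∀ n, 1 ≤ (ε n).natDegree) (n : ℕ) :
    u ε n ≠ 0 := by
  induction n with
  | zero => simp [u]
  | succ k ih =>
    have h : ε k ≠ 0 := by
      intro h
      have := hε k
      simp [h] at this
    simp only [u]
    exact mul_ne_zero h (pow_ne_zero 2 ih)

/-- In `𝔽₂(t)`, for every `n ≥ 1`, `v n / u n = Σ_{i=1}^{n} 1 / u i`. -/
theorem v_div_u_eq_sum (ε : ℕ → Polynomial (ZMod 2)) (hε : ∀ n, 1 ≤ (ε n).natDegree)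
    (n : ℕ) (hn : 1 ≤ n) :
    (algebraMap (Polynomial (ZMod 2)) (RatFunc (ZMod 2)) (v ε n)) /
        (algebraMap (Polynomial (ZMod 2)) (RatFunc (ZMod 2)) (u ε n)) =
      ∑ i ∈ Finset.Icc 1 n,
        (algebraMap (Polynomial (ZMod 2)) (RatFunc (ZMod 2)) (u ε i))⁻¹ := by
  clear hn
  induction n with
  | zero => simp [v]
  | succ k ih =>
    have inj := RatFunc.algebraMap_injective (ZMod 2)
    have hu := (map_ne_zero_iff _ inj).2 (u_ne_zero_aux ε hε k)
    have he : ε k ≠ 0 := by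
      intro h
      have := hε k
      simp [h] at this
    have he' := (map_ne_zero_iff _ inj).2 he
    rw [Finset.sum_Icc_succ_top (by omega), ← ih]
    simp only [u, v, map_mul, map_add, map_pow, map_one]
    field_simp
end
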